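/- For every state ρ^{AB} on H_A ⊗ H_B and every extension ρ^{ABE} of it on H_A ⊗ H_B ⊗ H_E, the quantum conditional mutual information satisfies I(A;B|E) ≥ I(A;B) - 2 S(AB), where I(A;B) = S(A) + S(B) - S(AB) is the quantum mutual information and S(AB) the entropy of ρ^{AB}. -/

import Mathlib

open Matrix BigOperators Kronecker
open scoped Classical ComplexOrder

noncomputable section

/-- A (quantum) state: positive semidefinite matrix of trace 1. -/
def IsState {n : Type*} [Fintype n] (ρ : Matrix n n ℂ) : Prop :=
  ρ.PosSemidef ∧ ρ.trace = 1

/-- Von Neumann entropy (base 2), via the eigenvalues of a Hermitian matrix. -/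
def vonNeumannEntropy {n : Type*} [Fintype n] (ρ : Matrix n n ℂ) : ℝ :=
  if h : ρ.IsHermitian then ∑ i, -(h.eigenvalues i * Real.logb 2 (h.eigenvalues i)) else 0

/-- Partial trace over the second (right) factor. -/
def ptraceR {A B : Type*} [Fintype A] [Fintype B]
    (ρ : Matrix (A × B) (A × B) ℂ) : Matrix A A ℂ :=
  fun i j => ∑ b, ρ (i, b) (j, b)

/-- Partial trace over the first (left) factor. -/
def ptraceL {A B : Type*} [Fintype A] [Fintype B]
    (ρ : Matrix (A × B) (A × B) ℂ) : Matrix B B ℂ :=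
  fun i j => ∑ a, ρ (a, i) (a, j)

variable {A B E : Type*} [Fintype A] [Fintype B] [Fintype E]

/-- Marginal of a tripartite state on `A × E` (trace out `B`). -/
def margAE (ρ : Matrix (A × B × E) (A × B × E) ℂ) : Matrix (A × E) (A × E) ℂ :=
  fun x y => ∑ b, ρ (x.1, b, x.2) (y.1, b, y.2)

/-- Marginal of a tripartite state on `B × E` (trace out `A`). -/
def margBE (ρ : Matrix (A × B × E) (A × B × E) ℂ) : Matrix (B × E) (B × E) ℂ :=
  fun x y => ∑ a, ρ (a, x.1, x.2) (a, y.1, y.2)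

/-- Marginal of a tripartite state on `E` (trace out `A` and `B`). -/
def margE (ρ : Matrix (A × B × E) (A × B × E) ℂ) : Matrix E E ℂ :=
  fun x y => ∑ a, ∑ b, ρ (a, b, x) (a, b, y)

/-- Marginal of a tripartite state on `A × B` (trace out `E`). -/
def margAB (ρ : Matrix (A × B × E) (A × B × E) ℂ) : Matrix (A × B) (A × B) ℂ :=
  fun x y => ∑ e, ρ (x.1, x.2, e) (y.1, y.2, e)

/-- Quantum conditional mutual information `I(A;B|E) = S(AE)+S(BE)-S(ABE)-S(E)`. -/
def condMutualInfo (ρ : Matrix (A × B × E) (A × B × E) ℂ) : ℝ :=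
  vonNeumannEntropy (margAE ρ) + vonNeumannEntropy (margBE ρ)
    - vonNeumannEntropy ρ - vonNeumannEntropy (margE ρ)

/-- Squashed entanglement: infimum of `(1/2) I(A;B|E)` over all finite-dimensional
extensions of `ρ`. -/
def Esq {A B : Type*} [Fintype A] [Fintype B] (ρ : Matrix (A × B) (A × B) ℂ) : ℝ :=
  sInf { x : ℝ | ∃ (d : ℕ) (ρE : Matrix (A × B × Fin d) (A × B × Fin d) ℂ),
    IsState ρE ∧ margAB ρE = ρ ∧ x = (1 / 2) * condMutualInfo ρE }

/-- Outer product `|ψ⟩⟨ψ|`. -/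
def outer {n : Type*} (ψ : n → ℂ) : Matrix n n ℂ :=
  Matrix.vecMulVec ψ (star ψ)

/-- Trace norm of a Hermitian matrix: sum of the absolute values of its eigenvalues. -/
def traceNorm {n : Type*} [Fintype n] (X : Matrix n n ℂ) : ℝ :=
  if h : X.IsHermitian then ∑ i, |h.eigenvalues i| else 0

/-- Entanglement of formation: infimum of average entanglement entropy over all
finite pure-state ensembles for `ρ`. -/
def EoF {A B : Type*} [Fintype A] [Fintype B] (ρ : Matrix (A × B) (A × B) ℂ) : ℝ :=
  sInf { x : ℝ | ∃ (n : ℕ) (p : Fin n → ℝ) (ψ : Fin n → A × B → ℂ),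
    (∀ k, 0 ≤ p k) ∧ (∑ k, p k) = 1 ∧ (∀ k, ∑ i, ‖ψ k i‖ ^ 2 = 1) ∧
    (∑ k, (p k : ℂ) • outer (ψ k)) = ρ ∧
    x = ∑ k, p k * vonNeumannEntropy (ptraceR (outer (ψ k))) }

/-- The function `η` : `η(x) = -x log₂ x` for `x ≤ 1/4`, `1/2` otherwise. -/
def eta (x : ℝ) : ℝ := if x ≤ 1 / 4 then -(x * Real.logb 2 x) else 1 / 2

/-!
The claim is the sum of two instances of strong subadditivity, `S(A) + S(ABE) ≤ S(AB) + S(AE)` and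
`S(B) + S(ABE) ≤ S(AB) + S(BE)`, and the Araki–Lieb inequality `S(E) ≤ S(AB) + S(ABE)`, which is
subadditivity on a purification.

Since `D(ρ‖1_E ⊗ ρ_AB) = S(AB) - S(ABE)`, strong subadditivity is the monotonicity of the relative
entropy under the partial trace over `A`. To prove monotonicity, write `D(ρ‖σ)` as the increment
over `[0, 1]` of `s ↦ ⟨1, L_ρ log ((1 - s) R_σ + s L_ρ) 1⟩`, with `L` and `R` the left and right
multiplication operators. Its derivative is
`(⟨ρ, ((1 - s) R_σ + s L_ρ)⁻¹ ρ⟩ - tr ρ) / (1 - s)`, where the first term is the maximum over `Y` of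
`2 Re tr(Y⋆ρ) - (1 - s) tr(Y⋆Yσ) - s tr(YY⋆ρ)`. Restricting to `Y = 1 ⊗ Y'` gives the same maximum
for the reduced states, so the partial trace can only decrease the derivative.
-/

section Entropy

variable {n m : Type*} [Fintype n] [Fintype m] {ρ : Matrix n n ℂ}

lemma vonNeumannEntropy_eq_sum_negMulLog [inst : DecidableEq n] (hρ : ρ.IsHermitian) :
    vonNeumannEntropy ρ = (∑ i, Real.negMulLog (hρ.eigenvalues i)) / Real.log 2 := by
  obtain rfl : inst = fun a b => Classical.propDecidable (a = b) := Subsingleton.elim _ _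
  rw [vonNeumannEntropy, dif_pos hρ, Finset.sum_div]
  refine Finset.sum_congr rfl fun i _ => ?_
  rw [Real.logb, Real.negMulLog]
  ring

lemma vonNeumannEntropy_eq_sum_roots_charpoly [DecidableEq n] (hρ : ρ.IsHermitian) :
    vonNeumannEntropy ρ =
      (ρ.charpoly.roots.map fun z => Real.negMulLog z.re).sum / Real.log 2 := by
  rw [vonNeumannEntropy_eq_sum_negMulLog hρ, hρ.roots_charpoly_eq_eigenvalues, Multiset.map_map]
  rfl

lemma vonNeumannEntropy_submatrix (hρ : ρ.IsHermitian) (e : m ≃ n) :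
    vonNeumannEntropy (ρ.submatrix e e) = vonNeumannEntropy ρ := by
  rw [vonNeumannEntropy_eq_sum_roots_charpoly (hρ.submatrix e),
    vonNeumannEntropy_eq_sum_roots_charpoly hρ]
  congr 4
  exact charpoly_reindex e.symm ρ

lemma vonNeumannEntropy_transpose (hρ : ρ.IsHermitian) :
    vonNeumannEntropy ρᵀ = vonNeumannEntropy ρ := by
  rw [vonNeumannEntropy_eq_sum_roots_charpoly hρ.transpose,
    vonNeumannEntropy_eq_sum_roots_charpoly hρ, charpoly_transpose]

lemma vonNeumannEntropy_mul_conjTranspose_comm (M : Matrix n m ℂ) :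
    vonNeumannEntropy (M * Mᴴ) = vonNeumannEntropy (Mᴴ * M) := by
  rw [vonNeumannEntropy_eq_sum_roots_charpoly (isHermitian_mul_conjTranspose_self M),
    vonNeumannEntropy_eq_sum_roots_charpoly (isHermitian_conjTranspose_mul_self M)]
  have hroots := congrArg Polynomial.roots (charpoly_mul_comm' M Mᴴ)
  rw [Polynomial.roots_mul ((Polynomial.monic_X_pow _).mul (charpoly_monic _)).ne_zero,
    Polynomial.roots_mul ((Polynomial.monic_X_pow _).mul (charpoly_monic _)).ne_zero,
    Polynomial.roots_X_pow, Polynomial.roots_X_pow] at hroots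
  have hsum := congrArg (fun s : Multiset ℂ => (s.map fun z => Real.negMulLog z.re).sum) hroots
  simp only [Multiset.map_add, Multiset.map_nsmul, Multiset.map_singleton, Multiset.sum_add,
    Multiset.sum_nsmul, Multiset.sum_singleton, Complex.zero_re, Real.negMulLog_zero, smul_zero,
    zero_add] at hsum
  rw [hsum]

lemma vonNeumannEntropy_of_unique [Unique n] (hρ : ρ.IsHermitian) :
    vonNeumannEntropy ρ = Real.negMulLog ρ.trace.re / Real.log 2 := by
  rw [vonNeumannEntropy_eq_sum_negMulLog hρ, hρ.trace_eq_sum_eigenvalues]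
  simp

lemma trace_cfc [DecidableEq n] (hρ : ρ.IsHermitian) (f : ℝ → ℝ) :
    (cfc f ρ).trace = ∑ i, (f (hρ.eigenvalues i) : ℂ) := by
  rw [hρ.cfc_eq, IsHermitian.cfc, Unitary.conjStarAlgAut_apply, trace_mul_cycle,
    Unitary.coe_star_mul_self, one_mul, trace_diagonal]
  rfl

lemma continuousOn_spectrum [DecidableEq n] (ρ : Matrix n n ℂ) (f : ℝ → ℝ) :
    ContinuousOn f (spectrum ℝ ρ) :=
  finite_real_spectrum.continuousOn f

lemma cfc_mul_log [DecidableEq n] (hρ : ρ.IsHermitian) :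
    cfc (fun x => x * Real.log x) ρ = ρ * cfc Real.log ρ := by
  rw [cfc_mul (fun x => x) Real.log ρ continuousOn_id (continuousOn_spectrum ρ _),
    cfc_id' ℝ ρ hρ.isSelfAdjoint]

lemma re_trace_mul_cfc_log [DecidableEq n] (hρ : ρ.IsHermitian) :
    (ρ * cfc Real.log ρ).trace.re = -(vonNeumannEntropy ρ * Real.log 2) := by
  rw [← cfc_mul_log hρ, trace_cfc hρ, vonNeumannEntropy_eq_sum_negMulLog hρ,
    div_mul_cancel₀ _ (Real.log_pos one_lt_two).ne']
  simp [Real.negMulLog]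

end Entropy

section JointTrace

variable {n : Type*} [Fintype n] [DecidableEq n] {ρ σ : Matrix n n ℂ}

/-- The change of basis `X ↦ U⋆ X V`, where the columns of `U` and `V` are the chosen eigenbases of
`ρ` and `σ`. It diagonalises left multiplication by `ρ` and right multiplication by `σ`
simultaneously. -/
def eigenbasesEquiv (hρ : ρ.IsHermitian) (hσ : σ.IsHermitian) :
    Matrix n n ℂ ≃ₗ[ℝ] Matrix n n ℂ where
  toFun X := star (hρ.eigenvectorUnitary : Matrix n n ℂ) * X * hσ.eigenvectorUnitary
  invFun X := hρ.eigenvectorUnitary * X * star (hσ.eigenvectorUnitary : Matrix n n ℂ)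
  map_add' X Y := by rw [mul_add, add_mul]
  map_smul' r X := by simp
  left_inv X := by
    simp only [mul_assoc, Unitary.mul_star_self_of_mem hσ.eigenvectorUnitary.2, mul_one]
    rw [← mul_assoc, Unitary.mul_star_self_of_mem hρ.eigenvectorUnitary.2, one_mul]
  right_inv X := by
    simp only [mul_assoc, Unitary.coe_star_mul_self, mul_one]
    rw [← mul_assoc, Unitary.coe_star_mul_self, one_mul]

lemma eigenbasesEquiv_cfc_mul_mul_cfc (hρ : ρ.IsHermitian) (hσ : σ.IsHermitian) (f g : ℝ → ℝ)
    (X : Matrix n n ℂ) (i j : n) :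
    eigenbasesEquiv hρ hσ (cfc f ρ * X * cfc g σ) i j =
      f (hρ.eigenvalues i) * eigenbasesEquiv hρ hσ X i j * g (hσ.eigenvalues j) := by
  have hdiag : eigenbasesEquiv hρ hσ (cfc f ρ * X * cfc g σ) =
      diagonal (fun i => (f (hρ.eigenvalues i) : ℂ)) * eigenbasesEquiv hρ hσ X *
        diagonal (fun j => (g (hσ.eigenvalues j) : ℂ)) := by
    rw [hρ.cfc_eq, hσ.cfc_eq, IsHermitian.cfc, IsHermitian.cfc, Unitary.conjStarAlgAut_apply,
      Unitary.conjStarAlgAut_apply]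
    simp only [eigenbasesEquiv, LinearEquiv.coe_mk, LinearMap.coe_mk, AddHom.coe_mk, mul_assoc,
      Unitary.coe_star_mul_self, mul_one]
    rw [← mul_assoc, Unitary.coe_star_mul_self, one_mul]
    rfl
  rw [hdiag, mul_diagonal, diagonal_mul]

lemma eigenbasesEquiv_mul_left (hρ : ρ.IsHermitian) (hσ : σ.IsHermitian) (X : Matrix n n ℂ)
    (i j : n) :
    eigenbasesEquiv hρ hσ (ρ * X) i j = hρ.eigenvalues i * eigenbasesEquiv hρ hσ X i j := by
  simpa [cfc_id' ℝ ρ hρ.isSelfAdjoint, cfc_const_one ℝ σ hσ.isSelfAdjoint] using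
    eigenbasesEquiv_cfc_mul_mul_cfc hρ hσ (fun x => x) (fun _ => 1) X i j

lemma eigenbasesEquiv_mul_right (hρ : ρ.IsHermitian) (hσ : σ.IsHermitian) (X : Matrix n n ℂ)
    (i j : n) :
    eigenbasesEquiv hρ hσ (X * σ) i j = eigenbasesEquiv hρ hσ X i j * hσ.eigenvalues j := by
  simpa [cfc_id' ℝ σ hσ.isSelfAdjoint, cfc_const_one ℝ ρ hρ.isSelfAdjoint] using
    eigenbasesEquiv_cfc_mul_mul_cfc hρ hσ (fun _ => 1) (fun x => x) X i j

lemma trace_conjTranspose_mul_eq_sum_eigenbasesEquiv (hρ : ρ.IsHermitian) (hσ : σ.IsHermitian)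
    (X Y : Matrix n n ℂ) :
    (Xᴴ * Y).trace =
      ∑ i, ∑ j, star (eigenbasesEquiv hρ hσ X i j) * eigenbasesEquiv hρ hσ Y i j := by
  have hrot : (eigenbasesEquiv hρ hσ X)ᴴ * eigenbasesEquiv hρ hσ Y =
      star (hσ.eigenvectorUnitary : Matrix n n ℂ) * (Xᴴ * Y) * hσ.eigenvectorUnitary := by
    simp only [eigenbasesEquiv, LinearEquiv.coe_mk, LinearMap.coe_mk, AddHom.coe_mk,
      ← star_eq_conjTranspose, star_mul, star_star, mul_assoc]
    rw [← mul_assoc (hρ.eigenvectorUnitary : Matrix n n ℂ),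
      Unitary.mul_star_self_of_mem hρ.eigenvectorUnitary.2, one_mul]
  have htrace : (Xᴴ * Y).trace =
      ((eigenbasesEquiv hρ hσ X)ᴴ * eigenbasesEquiv hρ hσ Y).trace := by
    rw [hrot, trace_mul_cycle, Unitary.mul_star_self_of_mem hσ.eigenvectorUnitary.2, one_mul]
  rw [htrace, Finset.sum_comm]
  rfl

/-- The Nussbaum–Szkoła weight `|⟨uᵢ, vⱼ⟩|²` of the `i`-th eigenvector of `ρ` and the `j`-th
eigenvector of `σ`. -/
def eigenOverlap (hρ : ρ.IsHermitian) (hσ : σ.IsHermitian) (i j : n) : ℝ :=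
  Complex.normSq (eigenbasesEquiv hρ hσ 1 i j)

/-- The trace `⟨1, φ(L_ρ, R_σ) 1⟩` of a function of the commuting operators of left multiplication
by `ρ` and right multiplication by `σ`, written out in their joint eigenbasis. -/
def jointTrace (hρ : ρ.IsHermitian) (hσ : σ.IsHermitian) (φ : ℝ → ℝ → ℝ) : ℝ :=
  ∑ i, ∑ j, eigenOverlap hρ hσ i j * φ (hρ.eigenvalues i) (hσ.eigenvalues j)

lemma jointTrace_mul (hρ : ρ.IsHermitian) (hσ : σ.IsHermitian) (f g : ℝ → ℝ) :
    jointTrace hρ hσ (fun x y => f x * g y) = (cfc f ρ * cfc g σ).trace.re := by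
  have h := trace_conjTranspose_mul_eq_sum_eigenbasesEquiv hρ hσ 1 (cfc f ρ * 1 * cfc g σ)
  simp only [eigenbasesEquiv_cfc_mul_mul_cfc] at h
  rw [conjTranspose_one, one_mul, mul_one] at h
  simp only [h, Complex.re_sum, jointTrace]
  refine Finset.sum_congr rfl fun i _ => Finset.sum_congr rfl fun j _ => ?_
  simp only [eigenOverlap, Complex.normSq_apply, RCLike.star_def, Complex.mul_re, Complex.conj_re,
    Complex.ofReal_re, Complex.ofReal_im, zero_mul, sub_zero, Complex.mul_im, add_zero, mul_zero,
    Complex.conj_im, zero_add, neg_mul, sub_neg_eq_add]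
  ring

lemma jointTrace_fst (hρ : ρ.IsHermitian) (hσ : σ.IsHermitian) (f : ℝ → ℝ) :
    jointTrace hρ hσ (fun x _ => f x) = (cfc f ρ).trace.re := by
  simpa [cfc_const_one ℝ σ hσ.isSelfAdjoint] using jointTrace_mul hρ hσ f (fun _ => 1)

end JointTrace

section Support

variable {n : Type*} [Fintype n] {ρ σ : Matrix n n ℂ}

/-- The support condition `supp ρ ⊆ supp σ` for Hermitian matrices, phrased as an inclusion of
right annihilators. -/
def SupportLE (ρ σ : Matrix n n ℂ) : Prop :=
  ∀ X : Matrix n n ℂ, σ * X = 0 → ρ * X = 0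

lemma exists_eq_conjTranspose_mul_self_of_posSemidef (hρ : ρ.PosSemidef) :
    ∃ Y : Matrix n n ℂ, ρ = Yᴴ * Y := by
  open scoped MatrixOrder in
  exact CStarAlgebra.nonneg_iff_eq_star_mul_self.1 hρ.nonneg

lemma mul_eq_zero_iff_trace_mul_conjTranspose_eq_zero (hρ : ρ.PosSemidef) (X : Matrix n n ℂ) :
    ρ * X = 0 ↔ (X * Xᴴ * ρ).trace = 0 := by
  obtain ⟨Y, rfl⟩ := exists_eq_conjTranspose_mul_self_of_posSemidef hρ
  have htrace : (X * Xᴴ * (Yᴴ * Y)).trace = ((Y * X)ᴴ * (Y * X)).trace := by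
    rw [mul_assoc, trace_mul_comm]
    simp only [conjTranspose_mul, mul_assoc]
  rw [htrace, trace_conjTranspose_mul_self_eq_zero_iff,
    conjTranspose_mul_self_mul_eq_zero]

lemma SupportLE.eigenOverlap_eq_zero [DecidableEq n] (h : SupportLE ρ σ) (hρ : ρ.IsHermitian)
    (hσ : σ.IsHermitian) {i j : n} (hi : hρ.eigenvalues i ≠ 0) (hj : hσ.eigenvalues j = 0) :
    eigenOverlap hρ hσ i j = 0 := by
  have hker : σ * cfc (fun x : ℝ => if x = 0 then (1 : ℝ) else 0) σ = 0 := by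
    nth_rw 1 [← cfc_id' ℝ σ hσ.isSelfAdjoint]
    rw [← cfc_mul (fun x => x) _ σ continuousOn_id (continuousOn_spectrum σ _)]
    have hzero (x : ℝ) : x * (if x = 0 then 1 else 0) = 0 := by split_ifs with hx <;> simp [hx]
    simp only [hzero, cfc_const_zero]
  have hentry := eigenbasesEquiv_cfc_mul_mul_cfc hρ hσ (fun x => x)
    (fun x => if x = 0 then 1 else 0) 1 i j
  rw [cfc_id' ℝ ρ hρ.isSelfAdjoint, mul_one, h _ hker, map_zero, if_pos hj] at hentry
  simpa [eigenOverlap, hi] using hentry.symm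

end Support

section Variational

variable {n : Type*} [Fintype n]

/-- The concave quadratic functional
`Y ↦ 2 Re tr(Y⋆ρ) - (1 - s) tr(Y⋆Yσ) - s tr(YY⋆ρ)`, whose maximum is
`⟨ρ, ((1 - s) R_σ + s L_ρ)⁻¹ ρ⟩`. -/
def quadraticFunctional (ρ σ : Matrix n n ℂ) (s : ℝ) (Y : Matrix n n ℂ) : ℝ :=
  2 * (Yᴴ * ρ).trace.re - (1 - s) * (Yᴴ * Y * σ).trace.re - s * (Y * Yᴴ * ρ).trace.re

variable [DecidableEq n] {ρ σ : Matrix n n ℂ} {s : ℝ}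

lemma quadraticFunctional_eq_sum (hρ : ρ.IsHermitian) (hσ : σ.IsHermitian) (Y : Matrix n n ℂ) :
    quadraticFunctional ρ σ s Y = ∑ i, ∑ j, (star (eigenbasesEquiv hρ hσ Y i j) *
      (2 * hρ.eigenvalues i * eigenbasesEquiv hρ hσ 1 i j -
        ((1 - s) * hσ.eigenvalues j + s * hρ.eigenvalues i : ℝ) *
          eigenbasesEquiv hρ hσ Y i j)).re := by
  have hlin := trace_conjTranspose_mul_eq_sum_eigenbasesEquiv hρ hσ Y (ρ * 1)
  have hright := trace_conjTranspose_mul_eq_sum_eigenbasesEquiv hρ hσ Y (Y * σ)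
  have hleft := trace_conjTranspose_mul_eq_sum_eigenbasesEquiv hρ hσ Y (ρ * Y)
  simp only [eigenbasesEquiv_mul_left, eigenbasesEquiv_mul_right] at hlin hright hleft
  rw [mul_one] at hlin
  rw [quadraticFunctional, mul_assoc Yᴴ, mul_assoc Y, trace_mul_comm Y, mul_assoc Yᴴ, hlin,
    hright, hleft]
  simp only [Complex.re_sum, Finset.mul_sum, ← Finset.sum_sub_distrib]
  refine Finset.sum_congr rfl fun i _ => Finset.sum_congr rfl fun j _ => ?_
  simp only [RCLike.star_def, Complex.mul_re, Complex.conj_re, Complex.ofReal_re,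
    Complex.ofReal_im, zero_mul, sub_zero, Complex.conj_im, Complex.mul_im, add_zero, neg_mul,
    sub_neg_eq_add, mul_zero, zero_add, Complex.sub_re, Complex.re_ofNat, Complex.im_ofNat,
    Complex.sub_im]
  ring

lemma re_star_mul_sub_le {x c : ℝ} (hc : 0 ≤ c) (hx : c = 0 → x = 0) (w z : ℂ) :
    (star z * (2 * x * w - c * z)).re ≤ Complex.normSq w * (x ^ 2 / c) := by
  rcases hc.eq_or_lt with rfl | hc
  · simp [hx rfl]
  have hsq := Complex.normSq_nonneg (x * w - c * z)
  rw [mul_div_assoc', le_div_iff₀ hc]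
  simp only [Complex.normSq_apply, Complex.sub_re, Complex.mul_re, Complex.ofReal_re,
    Complex.ofReal_im, zero_mul, sub_zero, Complex.sub_im, Complex.mul_im, add_zero,
    RCLike.star_def, Complex.conj_re, Complex.re_ofNat, Complex.im_ofNat, mul_zero,
    Complex.conj_im, neg_mul, sub_neg_eq_add] at hsq ⊢
  linarith

lemma re_star_mul_sub_eq {x c : ℝ} (hx : c = 0 → x = 0) (w : ℂ) :
    (star ((x / c : ℝ) * w) * (2 * x * w - c * ((x / c : ℝ) * w))).re =
      Complex.normSq w * (x ^ 2 / c) := by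
  by_cases hc : c = 0
  · simp [hx hc, hc]
  rw [← mul_assoc, ← Complex.ofReal_mul, mul_div_cancel₀ _ hc]
  simp only [Complex.normSq_apply, RCLike.star_def, star_mul', Complex.conj_ofReal, Complex.mul_re,
    Complex.ofReal_re, Complex.conj_re, Complex.ofReal_im, Complex.conj_im, zero_mul, sub_zero,
    Complex.sub_re, Complex.re_ofNat, Complex.im_ofNat, mul_zero, Complex.mul_im, add_zero,
    Complex.sub_im, neg_mul, mul_neg, sub_neg_eq_add]
  ring

lemma isGreatest_range_quadraticFunctional (hρ : ρ.PosSemidef) (hσ : σ.PosSemidef)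
    (hs : s ∈ Set.Ioo (0 : ℝ) 1) :
    IsGreatest (Set.range (quadraticFunctional ρ σ s))
      (jointTrace hρ.isHermitian hσ.isHermitian fun x y => x ^ 2 / ((1 - s) * y + s * x)) := by
  set T := eigenbasesEquiv hρ.isHermitian hσ.isHermitian
  set w := hρ.isHermitian.eigenvalues
  set v := hσ.isHermitian.eigenvalues
  have hw (i : n) : 0 ≤ s * w i := mul_nonneg hs.1.le (hρ.eigenvalues_nonneg i)
  have hv (j : n) : 0 ≤ (1 - s) * v j :=
    mul_nonneg (sub_nonneg.2 hs.2.le) (hσ.eigenvalues_nonneg j)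
  have hzero (i j : n) (h : (1 - s) * v j + s * w i = 0) : w i = 0 := by
    simpa [hs.1.ne'] using ((add_eq_zero_iff_of_nonneg (hv j) (hw i)).1 h).2
  constructor
  · refine ⟨T.symm (of fun i j => (w i / ((1 - s) * v j + s * w i) : ℝ) * T 1 i j), ?_⟩
    rw [quadraticFunctional_eq_sum hρ.isHermitian hσ.isHermitian]
    refine Finset.sum_congr rfl fun i _ => Finset.sum_congr rfl fun j _ => ?_
    rw [LinearEquiv.apply_symm_apply, of_apply]
    exact re_star_mul_sub_eq (hzero i j) _
  · rintro _ ⟨Y, rfl⟩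
    rw [quadraticFunctional_eq_sum hρ.isHermitian hσ.isHermitian]
    exact Finset.sum_le_sum fun i _ => Finset.sum_le_sum fun j _ =>
      re_star_mul_sub_le (add_nonneg (hv j) (hw i)) (hzero i j) _ _

end Variational

section RelativeEntropy

variable {n : Type*} [Fintype n] [DecidableEq n] {ρ σ : Matrix n n ℂ} {s : ℝ}

/-- The Umegaki relative entropy `D(ρ‖σ) = tr ρ (log ρ - log σ)`, with the natural logarithm. Since
`Real.log 0 = 0`, this is the true (finite) value only if `SupportLE ρ σ`. -/
def relEntropy (ρ σ : Matrix n n ℂ) : ℝ :=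
  (ρ * (cfc Real.log ρ - cfc Real.log σ)).trace.re

/-- The function `s ↦ ⟨1, L_ρ log ((1 - s) R_σ + s L_ρ) 1⟩`, which rises from `tr ρ log σ` to
`tr ρ log ρ` along the unit interval. -/
def logInterpolation (hρ : ρ.IsHermitian) (hσ : σ.IsHermitian) (s : ℝ) : ℝ :=
  jointTrace hρ hσ fun x y => x * Real.log ((1 - s) * y + s * x)

lemma relEntropy_eq_logInterpolation_sub (hρ : ρ.IsHermitian) (hσ : σ.IsHermitian) :
    relEntropy ρ σ = logInterpolation hρ hσ 1 - logInterpolation hρ hσ 0 := by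
  have h₁ : logInterpolation hρ hσ 1 = (ρ * cfc Real.log ρ).trace.re := by
    rw [← cfc_mul_log hρ, ← jointTrace_fst hρ hσ]
    simp [logInterpolation]
  have h₀ : logInterpolation hρ hσ 0 = (ρ * cfc Real.log σ).trace.re := by
    nth_rw 2 [← cfc_id' ℝ ρ hρ.isSelfAdjoint]
    rw [← jointTrace_mul hρ hσ]
    simp [logInterpolation]
  rw [h₁, h₀, relEntropy, mul_sub, trace_sub, Complex.sub_re]

lemma hasDerivAt_mul_log_interpolation {x y : ℝ} (hx : 0 ≤ x) (hy : 0 ≤ y)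
    (hs : s ∈ Set.Ioo (0 : ℝ) 1) :
    HasDerivAt (fun t => x * Real.log ((1 - t) * y + t * x))
      ((x ^ 2 / ((1 - s) * y + s * x) - x) / (1 - s)) s := by
  have h1s : 0 < 1 - s := sub_pos.2 hs.2
  rcases hx.eq_or_lt with rfl | hx
  · simpa using hasDerivAt_const s (0 : ℝ)
  have hc : 0 < (1 - s) * y + s * x :=
    add_pos_of_nonneg_of_pos (mul_nonneg h1s.le hy) (mul_pos hs.1 hx)
  have hlin : HasDerivAt (fun t => (1 - t) * y + t * x) (-1 * y + 1 * x) s :=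
    (((hasDerivAt_id s).const_sub 1).mul_const y).add ((hasDerivAt_id s).mul_const x)
  refine ((hlin.log hc.ne').const_mul x).congr_deriv ?_
  rw [div_sub' hc.ne', div_div, mul_div_assoc', div_eq_div_iff hc.ne' (mul_pos hc h1s).ne']
  ring

lemma hasDerivAt_logInterpolation (hρ : ρ.PosSemidef) (hσ : σ.PosSemidef)
    (hs : s ∈ Set.Ioo (0 : ℝ) 1) :
    HasDerivAt (logInterpolation hρ.isHermitian hσ.isHermitian)
      ((jointTrace hρ.isHermitian hσ.isHermitian (fun x y => x ^ 2 / ((1 - s) * y + s * x)) -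
        ρ.trace.re) / (1 - s)) s := by
  have htrace : ρ.trace.re = jointTrace hρ.isHermitian hσ.isHermitian fun x _ => x := by
    rw [jointTrace_fst, cfc_id' ℝ ρ hρ.isHermitian.isSelfAdjoint]
  rw [htrace]
  simp only [jointTrace, ← Finset.sum_sub_distrib, Finset.sum_div, ← mul_sub, mul_div_assoc]
  exact HasDerivAt.fun_sum fun i _ => HasDerivAt.fun_sum fun j _ =>
    (hasDerivAt_mul_log_interpolation (hρ.eigenvalues_nonneg i)
      (hσ.eigenvalues_nonneg j) hs).const_mul _

lemma SupportLE.continuousOn_logInterpolation (h : SupportLE ρ σ) (hρ : ρ.PosSemidef)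
    (hσ : σ.PosSemidef) :
    ContinuousOn (logInterpolation hρ.isHermitian hσ.isHermitian) (Set.Icc 0 1) := by
  refine continuousOn_finsetSum _ fun i _ => continuousOn_finsetSum _ fun j _ => ?_
  rcases (hρ.eigenvalues_nonneg i).eq_or_lt' with hi | hi
  · simpa [hi] using continuousOn_const
  rcases (hσ.eigenvalues_nonneg j).eq_or_lt' with hj | hj
  · simpa [h.eigenOverlap_eq_zero hρ.isHermitian hσ.isHermitian hi.ne' hj] using continuousOn_const
  refine continuousOn_const.mul (continuousOn_const.mul (ContinuousOn.log (by fun_prop) ?_))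
  intro s hs
  have h1s := sub_nonneg.2 hs.2
  rcases hs.1.eq_or_lt with rfl | hs
  · simpa using hj.ne'
  · exact (add_pos_of_nonneg_of_pos (mul_nonneg h1s hj.le) (mul_pos hs hi)).ne'

end RelativeEntropy

section ReducedState

variable {n k m : Type*} [Fintype k] [Fintype m]

lemma trace_submatrix_equiv [Fintype n] (e : n ≃ m) (ρ : Matrix m m ℂ) :
    (ρ.submatrix e e).trace = ρ.trace :=
  e.sum_comp fun i => ρ i i

lemma trace_ptraceL (ρ : Matrix (k × m) (k × m) ℂ) : (ptraceL ρ).trace = ρ.trace := by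
  rw [trace, trace, Fintype.sum_prod_type_right]
  rfl

/-- The reduced state on the factor `m` of a system factorised by `e : n ≃ k × m`, that is, the
partial trace over `k`. -/
def reducedState (e : n ≃ k × m) (ρ : Matrix n n ℂ) : Matrix m m ℂ :=
  ptraceL (ρ.submatrix e.symm e.symm)

lemma trace_reducedState [Fintype n] (e : n ≃ k × m) (ρ : Matrix n n ℂ) :
    (reducedState e ρ).trace = ρ.trace :=
  (trace_ptraceL _).trans (trace_submatrix_equiv e.symm ρ)

/-- The embedding `X ↦ 1 ⊗ X` of the observables of the factor `m` into those of a system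
factorised by `e : n ≃ k × m`. -/
def ampliation [Fintype n] [DecidableEq n] [DecidableEq k] [DecidableEq m] (e : n ≃ k × m) :
    Matrix m m ℂ →⋆ₐ[ℝ] Matrix n n ℂ where
  toFun X := ((1 : Matrix k k ℂ) ⊗ₖ X).submatrix e e
  map_one' := by rw [one_kronecker_one, submatrix_one_equiv]
  map_mul' X Y := by rw [submatrix_mul_equiv, ← mul_kronecker_mul, one_mul]
  map_zero' := by rw [kronecker_zero]; rfl
  map_add' X Y := by rw [kronecker_add, submatrix_add]; rfl
  commutes' r := by
    rw [Algebra.algebraMap_eq_smul_one, Algebra.algebraMap_eq_smul_one, kronecker_smul,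
      one_kronecker_one]
    exact congrArg (fun X : Matrix n n ℂ => r • X) (submatrix_one_equiv e)
  map_star' X := by
    simp only [star_eq_conjTranspose, conjTranspose_submatrix, conjTranspose_kronecker,
      conjTranspose_one]

lemma ptraceL_one_kronecker_mul [DecidableEq k] (X : Matrix m m ℂ)
    (ρ : Matrix (k × m) (k × m) ℂ) :
    ptraceL (((1 : Matrix k k ℂ) ⊗ₖ X) * ρ) = X * ptraceL ρ := by
  ext i j
  simp only [ptraceL, mul_apply, kroneckerMap_apply, one_apply, ite_mul, one_mul, zero_mul,
    Fintype.sum_prod_type, Finset.sum_ite_irrel, Finset.sum_const_zero, Finset.sum_ite_eq,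
    Finset.mem_univ, if_true, Finset.mul_sum]
  exact Finset.sum_comm

section

variable [Fintype n] [DecidableEq n] [DecidableEq k] [DecidableEq m]

lemma trace_ampliation_mul (e : n ≃ k × m) (X : Matrix m m ℂ) (ρ : Matrix n n ℂ) :
    (ampliation e X * ρ).trace = (X * reducedState e ρ).trace := by
  have hsub : (ampliation e X * ρ).submatrix e.symm e.symm =
      ((1 : Matrix k k ℂ) ⊗ₖ X) * ρ.submatrix e.symm e.symm := by
    rw [← submatrix_mul_equiv _ _ _ e.symm]
    simp [ampliation]
  rw [← trace_submatrix_equiv e.symm, hsub, reducedState, ← ptraceL_one_kronecker_mul,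
    trace_ptraceL]

lemma posSemidef_ampliation (e : n ≃ k × m) {X : Matrix m m ℂ} (hX : X.PosSemidef) :
    (ampliation e X).PosSemidef :=
  (PosSemidef.one.kronecker hX).submatrix e

lemma cfc_ampliation (e : n ≃ k × m) {X : Matrix m m ℂ} (hX : X.IsHermitian) (f : ℝ → ℝ) :
    cfc f (ampliation e X) = ampliation e (cfc f X) :=
  (StarAlgHom.map_cfc (ampliation e) f X (continuousOn_spectrum X f)
    (LinearMap.continuous_of_finiteDimensional (ampliation e).toLinearMap) hX.isSelfAdjoint
    (hX.isSelfAdjoint.map (ampliation e))).symm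

lemma quadraticFunctional_reducedState (e : n ≃ k × m) (ρ σ : Matrix n n ℂ) (s : ℝ)
    (Y : Matrix m m ℂ) :
    quadraticFunctional (reducedState e ρ) (reducedState e σ) s Y =
      quadraticFunctional ρ σ s (ampliation e Y) := by
  simp only [quadraticFunctional, ← star_eq_conjTranspose, ← map_star, ← map_mul,
    trace_ampliation_mul]

end

lemma posSemidef_ptraceL {ρ : Matrix (k × m) (k × m) ℂ} (hρ : ρ.PosSemidef) :
    (ptraceL ρ).PosSemidef := by
  have hsum : ptraceL ρ = ∑ a, ρ.submatrix (Prod.mk a) (Prod.mk a) := by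
    ext i j
    simp [ptraceL, Matrix.sum_apply]
  rw [hsum]
  exact posSemidef_sum _ fun a _ => hρ.submatrix _

lemma posSemidef_reducedState (e : n ≃ k × m) {ρ : Matrix n n ℂ} (hρ : ρ.PosSemidef) :
    (reducedState e ρ).PosSemidef :=
  posSemidef_ptraceL (hρ.submatrix _)

end ReducedState

section DataProcessing

variable {n k m : Type*} [Fintype n] [Fintype k] [Fintype m] {ρ σ : Matrix n n ℂ}

lemma mul_ampliation_eq_zero_iff [DecidableEq n] [DecidableEq k] [DecidableEq m] (e : n ≃ k × m)
    (hρ : ρ.PosSemidef) (X : Matrix m m ℂ) :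
    ρ * ampliation e X = 0 ↔ reducedState e ρ * X = 0 := by
  rw [mul_eq_zero_iff_trace_mul_conjTranspose_eq_zero hρ,
    mul_eq_zero_iff_trace_mul_conjTranspose_eq_zero (posSemidef_reducedState e hρ),
    ← trace_ampliation_mul, map_mul, ← star_eq_conjTranspose, ← star_eq_conjTranspose, map_star]

lemma SupportLE.reducedState (h : SupportLE ρ σ) (e : n ≃ k × m) (hρ : ρ.PosSemidef)
    (hσ : σ.PosSemidef) : SupportLE (reducedState e ρ) (reducedState e σ) := fun X hX =>
  (mul_ampliation_eq_zero_iff e hρ X).1 (h _ ((mul_ampliation_eq_zero_iff e hσ X).2 hX))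

lemma supportLE_ampliation_reducedState [DecidableEq n] [DecidableEq k] [DecidableEq m]
    (e : n ≃ k × m) (hρ : ρ.PosSemidef) :
    SupportLE ρ (ampliation e (reducedState e ρ)) := by
  intro X hX
  set ω := reducedState e ρ with hω
  have hωsa : IsSelfAdjoint ω := (posSemidef_reducedState e hρ).isHermitian
  have hpinv : ω * (cfc (fun x : ℝ => x⁻¹) ω * ω) = ω := by
    nth_rw 1 [← cfc_id' ℝ ω hωsa]
    nth_rw 3 [← cfc_id' ℝ ω hωsa]
    rw [← cfc_mul _ (fun x => x) ω (continuousOn_spectrum ω _) (continuousOn_spectrum ω _),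
      ← cfc_mul (fun x => x) _ ω (continuousOn_spectrum ω _) (continuousOn_spectrum ω _)]
    simp only [← mul_assoc, mul_inv_mul_cancel]
    exact cfc_id' ℝ ω hωsa
  -- `1 - ω⁻¹ω`, with the pseudo-inverse `ω⁻¹`, is the projection onto the kernel of `ω`.
  have hker : ρ * ampliation e (1 - cfc (fun x : ℝ => x⁻¹) ω * ω) = 0 := by
    rw [mul_ampliation_eq_zero_iff e hρ, ← hω, mul_sub, mul_one, hpinv, sub_self]
  rw [map_sub, map_one, map_mul, mul_sub, mul_one, sub_eq_zero] at hker
  rw [hker, mul_assoc, mul_assoc, hX, mul_zero, mul_zero]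

variable [DecidableEq n] [DecidableEq m]

lemma jointTrace_reducedState_le (e : n ≃ k × m) (hρ : ρ.PosSemidef) (hσ : σ.PosSemidef) {s : ℝ}
    (hs : s ∈ Set.Ioo (0 : ℝ) 1) :
    jointTrace (posSemidef_reducedState e hρ).isHermitian (posSemidef_reducedState e hσ).isHermitian
        (fun x y => x ^ 2 / ((1 - s) * y + s * x)) ≤
      jointTrace hρ.isHermitian hσ.isHermitian fun x y => x ^ 2 / ((1 - s) * y + s * x) := by
  obtain ⟨⟨Y, hY⟩, -⟩ := isGreatest_range_quadraticFunctional (posSemidef_reducedState e hρ)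
    (posSemidef_reducedState e hσ) hs
  rw [← hY, quadraticFunctional_reducedState]
  exact (isGreatest_range_quadraticFunctional hρ hσ hs).2 ⟨ampliation e Y, rfl⟩

theorem relEntropy_reducedState_le (e : n ≃ k × m) (hρ : ρ.PosSemidef) (hσ : σ.PosSemidef)
    (h : SupportLE ρ σ) :
    relEntropy (reducedState e ρ) (reducedState e σ) ≤ relEntropy ρ σ := by
  have hρ' := posSemidef_reducedState e hρ
  have hσ' := posSemidef_reducedState e hσ
  have hcont := (h.continuousOn_logInterpolation hρ hσ).sub
    ((h.reducedState e hρ hσ).continuousOn_logInterpolation hρ' hσ')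
  have hderiv {s : ℝ} (hs : s ∈ Set.Ioo (0 : ℝ) 1) :=
    (hasDerivAt_logInterpolation hρ hσ hs).sub (hasDerivAt_logInterpolation hρ' hσ' hs)
  have hmono : MonotoneOn (logInterpolation hρ.isHermitian hσ.isHermitian -
      logInterpolation hρ'.isHermitian hσ'.isHermitian) (Set.Icc 0 1) := by
    refine monotoneOn_of_deriv_nonneg (convex_Icc 0 1) hcont ?_ ?_ <;> rw [interior_Icc] <;>
      intro s hs
    · exact (hderiv hs).differentiableAt.differentiableWithinAt
    · rw [(hderiv hs).deriv, ← sub_div, trace_reducedState, sub_sub_sub_cancel_right]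
      exact div_nonneg (sub_nonneg.2 (jointTrace_reducedState_le e hρ hσ hs))
        (sub_nonneg.2 hs.2.le)
  have hends := hmono (Set.left_mem_Icc.2 zero_le_one) (Set.right_mem_Icc.2 zero_le_one) zero_le_one
  simp only [Pi.sub_apply] at hends
  rw [relEntropy_eq_logInterpolation_sub hρ.isHermitian hσ.isHermitian,
    relEntropy_eq_logInterpolation_sub hρ'.isHermitian hσ'.isHermitian]
  linarith

lemma relEntropy_ampliation_reducedState [DecidableEq k] (e : n ≃ k × m) (hρ : ρ.PosSemidef) :
    relEntropy ρ (ampliation e (reducedState e ρ)) =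
      (vonNeumannEntropy (reducedState e ρ) - vonNeumannEntropy ρ) * Real.log 2 := by
  have hred := (posSemidef_reducedState e hρ).isHermitian
  rw [relEntropy, mul_sub, trace_sub, Complex.sub_re, re_trace_mul_cfc_log hρ.isHermitian,
    cfc_ampliation e hred, trace_mul_comm ρ, trace_ampliation_mul, trace_mul_comm,
    re_trace_mul_cfc_log hred]
  ring

end DataProcessing

section EntropyInequalities

lemma posSemidef_ptraceR {ρ : Matrix (A × B) (A × B) ℂ} (hρ : ρ.PosSemidef) :
    (ptraceR ρ).PosSemidef :=
  posSemidef_ptraceL (hρ.submatrix Prod.swap)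

lemma posSemidef_margAB {A B : Type*} {ρ : Matrix (A × B × E) (A × B × E) ℂ}
    (hρ : ρ.PosSemidef) : (margAB ρ).PosSemidef := by
  have hsum : margAB ρ = ∑ e, ρ.submatrix (fun x => (x.1, x.2, e)) (fun x => (x.1, x.2, e)) := by
    ext i j
    simp [margAB, Matrix.sum_apply]
  rw [hsum]
  exact posSemidef_sum _ fun e _ => hρ.submatrix _

theorem strong_subadditivity {ρ : Matrix (A × B × E) (A × B × E) ℂ} (hρ : ρ.PosSemidef) :
    vonNeumannEntropy (ptraceL (margAB ρ)) + vonNeumannEntropy ρ ≤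
      vonNeumannEntropy (margAB ρ) + vonNeumannEntropy (margBE ρ) := by
  let eAB : A × B × E ≃ E × A × B := (Equiv.prodAssoc A B E).symm.trans (Equiv.prodComm _ _)
  let eBE : A × B × E ≃ A × B × E := Equiv.refl _
  let eB : B × E ≃ E × B := Equiv.prodComm B E
  have hBE : (margBE ρ).PosSemidef := posSemidef_reducedState eBE hρ
  have hB : ptraceL (margAB ρ) = reducedState eB (margBE ρ) := by
    ext i j
    exact Finset.sum_comm
  have href : ampliation eB (ptraceL (margAB ρ)) =
      reducedState eBE (ampliation eAB (margAB ρ)) := by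
    ext i j
    exact Finset.mul_sum Finset.univ _ _
  have hdpi : (vonNeumannEntropy (ptraceL (margAB ρ)) - vonNeumannEntropy (margBE ρ)) *
      Real.log 2 ≤ (vonNeumannEntropy (margAB ρ) - vonNeumannEntropy ρ) * Real.log 2 := calc
    _ = relEntropy (margBE ρ) (ampliation eB (ptraceL (margAB ρ))) := by
      rw [hB, relEntropy_ampliation_reducedState eB hBE]
    _ = relEntropy (reducedState eBE ρ) (reducedState eBE (ampliation eAB (margAB ρ))) := by
      rw [href]; rfl
    _ ≤ relEntropy ρ (ampliation eAB (margAB ρ)) :=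
      relEntropy_reducedState_le eBE hρ (posSemidef_ampliation eAB (posSemidef_margAB hρ))
        (supportLE_ampliation_reducedState eAB hρ)
    _ = _ := relEntropy_ampliation_reducedState eAB hρ
  linarith [le_of_mul_le_mul_right hdpi (Real.log_pos one_lt_two)]

theorem strong_subadditivity_swap {ρ : Matrix (A × B × E) (A × B × E) ℂ} (hρ : ρ.PosSemidef) :
    vonNeumannEntropy (ptraceR (margAB ρ)) + vonNeumannEntropy ρ ≤
      vonNeumannEntropy (margAB ρ) + vonNeumannEntropy (margAE ρ) := by
  let f : B × A × E ≃ A × B × E := (Equiv.prodAssoc B A E).symm.trans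
    (((Equiv.prodComm B A).prodCongr (Equiv.refl E)).trans (Equiv.prodAssoc A B E))
  have hAB : margAB (ρ.submatrix f f) =
      (margAB ρ).submatrix (Equiv.prodComm B A) (Equiv.prodComm B A) := rfl
  have hA : ptraceL ((margAB ρ).submatrix (Equiv.prodComm B A) (Equiv.prodComm B A)) =
      ptraceR (margAB ρ) := rfl
  have hAE : margBE (ρ.submatrix f f) = margAE ρ := rfl
  have hssa := strong_subadditivity (hρ.submatrix f)
  rwa [hAB, hA, hAE, vonNeumannEntropy_submatrix hρ.isHermitian,
    vonNeumannEntropy_submatrix (posSemidef_margAB hρ).isHermitian] at hssa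

lemma trace_ptraceR (ρ : Matrix (A × B) (A × B) ℂ) : (ptraceR ρ).trace = ρ.trace := by
  rw [trace, trace, Fintype.sum_prod_type]
  rfl

theorem subadditivity {ρ : Matrix (A × B) (A × B) ℂ} (hρ : ρ.PosSemidef) :
    vonNeumannEntropy ρ + Real.negMulLog ρ.trace.re / Real.log 2 ≤
      vonNeumannEntropy (ptraceR ρ) + vonNeumannEntropy (ptraceL ρ) := by
  let f : A × Unit × B ≃ A × B := (Equiv.refl A).prodCongr (Equiv.punitProd B)
  have hssa := strong_subadditivity (hρ.submatrix f)
  have hA : margAB (ρ.submatrix f f) =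
      (ptraceR ρ).submatrix (Equiv.prodPUnit A) (Equiv.prodPUnit A) := rfl
  have hB : margBE (ρ.submatrix f f) =
      (ptraceL ρ).submatrix (Equiv.punitProd B) (Equiv.punitProd B) := rfl
  have hunit := posSemidef_ptraceL ((posSemidef_ptraceR hρ).submatrix (Equiv.prodPUnit A))
  rw [hA, hB, vonNeumannEntropy_of_unique hunit.isHermitian, trace_ptraceL, trace_submatrix_equiv,
    trace_ptraceR, vonNeumannEntropy_submatrix hρ.isHermitian,
    vonNeumannEntropy_submatrix (posSemidef_ptraceR hρ).isHermitian,
    vonNeumannEntropy_submatrix (posSemidef_ptraceL hρ).isHermitian] at hssa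
  rwa [add_comm]

/-- The vector on `A × B × R` with entries `star (Y r (a, b))`, whose reduced state on `A × B` is
the transpose of `Yᴴ * Y`, written as a matrix across the cut `B | A × R`. -/
def purification {R : Type*} (Y : Matrix R (A × B) ℂ) : Matrix B (A × R) ℂ :=
  of fun b p => star (Y p.2 (p.1, b))

variable {R : Type*} [Fintype R] (Y : Matrix R (A × B) ℂ)

lemma purification_mul_conjTranspose :
    purification Y * (purification Y)ᴴ = ptraceL (Yᴴ * Y) := by
  ext b b'
  simp only [purification, ptraceL, mul_apply, conjTranspose_apply, of_apply, star_star]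
  exact Fintype.sum_prod_type _

lemma ptraceR_conjTranspose_mul_purification :
    ptraceR ((purification Y)ᴴ * purification Y) = (ptraceR (Yᴴ * Y))ᵀ := by
  ext a a'
  simp only [purification, ptraceR, mul_apply, conjTranspose_apply, of_apply, star_star,
    transpose_apply]
  rw [Finset.sum_comm]
  exact Finset.sum_congr rfl fun b _ => Finset.sum_congr rfl fun r _ => mul_comm _ _

lemma ptraceL_conjTranspose_mul_purification :
    ptraceL ((purification Y)ᴴ * purification Y) = Y * Yᴴ := by
  ext r r'
  simp only [purification, ptraceL, mul_apply, conjTranspose_apply, of_apply, star_star]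
  exact (Fintype.sum_prod_type fun p => Y r p * star (Y r' p)).symm

theorem araki_lieb {ρ : Matrix (A × B) (A × B) ℂ} (hρ : ρ.PosSemidef) :
    vonNeumannEntropy (ptraceL ρ) + Real.negMulLog ρ.trace.re / Real.log 2 ≤
      vonNeumannEntropy (ptraceR ρ) + vonNeumannEntropy ρ := by
  obtain ⟨Y, rfl⟩ := exists_eq_conjTranspose_mul_self_of_posSemidef hρ
  have hsub := subadditivity (posSemidef_conjTranspose_mul_self (purification Y))
  rwa [← vonNeumannEntropy_mul_conjTranspose_comm, purification_mul_conjTranspose,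
    trace_mul_comm, purification_mul_conjTranspose, trace_ptraceL,
    ptraceR_conjTranspose_mul_purification, ptraceL_conjTranspose_mul_purification,
    vonNeumannEntropy_transpose (posSemidef_ptraceR hρ).isHermitian,
    vonNeumannEntropy_mul_conjTranspose_comm] at hsub

theorem araki_lieb_margE {ρ : Matrix (A × B × E) (A × B × E) ℂ} (hρ : ρ.PosSemidef) :
    vonNeumannEntropy (margE ρ) + Real.negMulLog ρ.trace.re / Real.log 2 ≤
      vonNeumannEntropy (margAB ρ) + vonNeumannEntropy ρ := by
  let f : (A × B) × E ≃ A × B × E := Equiv.prodAssoc A B E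
  have hAB : ptraceR (ρ.submatrix f f) = margAB ρ := rfl
  have hE : ptraceL (ρ.submatrix f f) = margE ρ := by
    ext i j
    exact Fintype.sum_prod_type fun p : A × B => ρ (p.1, p.2, i) (p.1, p.2, j)
  have hal := araki_lieb (hρ.submatrix f)
  rwa [hAB, hE, trace_submatrix_equiv, vonNeumannEntropy_submatrix hρ.isHermitian] at hal

end EntropyInequalities

theorem condMutualInfo_ge_mutualInfo_sub_two_entropy_general
    (ρ : Matrix (A × B) (A × B) ℂ) (ρE : Matrix (A × B × E) (A × B × E) ℂ)
    (hρE : ρE.PosSemidef) (hext : margAB ρE = ρ) :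
    condMutualInfo ρE ≥
      (vonNeumannEntropy (ptraceR ρ) + vonNeumannEntropy (ptraceL ρ) - vonNeumannEntropy ρ)
        - 2 * vonNeumannEntropy ρ + Real.negMulLog ρE.trace.re / Real.log 2 := by
  subst hext
  have hssaB := strong_subadditivity hρE
  have hssaA := strong_subadditivity_swap hρE
  have hal := araki_lieb_margE hρE
  rw [condMutualInfo]
  linarith

/-- For every extension `ρ^{ABE}` of a state `ρ^{AB}`,
`I(A;B|E) ≥ I(A;B) - 2 S(AB)`. -/
theorem condMutualInfo_ge_mutualInfo_sub_two_entropy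
    {A B E : Type*} [Fintype A] [Fintype B] [Fintype E]
    (ρ : Matrix (A × B) (A × B) ℂ)
    (ρE : Matrix (A × B × E) (A × B × E) ℂ)
    (hρE : IsState ρE) (hext : margAB ρE = ρ) :
    condMutualInfo ρE ≥
      (vonNeumannEntropy (ptraceR ρ) + vonNeumannEntropy (ptraceL ρ) - vonNeumannEntropy ρ)
        - 2 * vonNeumannEntropy ρ := by
  simpa [hρE.2] using condMutualInfo_ge_mutualInfo_sub_two_entropy_general ρ ρE hρE.1 hext

end
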